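/- For every a > 0 there exist constants C > 0 and β > 0 such that for every integer M ≥ 1 and every real λ ≥ a, one has | 1/λ − Σ_{k=−M}^{M} c_k e^{−t_k λ} | ≤ C e^{−β √M}, where 𝔥 = π/√M, t_k = e^{k𝔥} and c_k = 𝔥 t_k. -/

import Mathlib

open Real FourierTransform

/-- Summability of a two-sided sequence dominated by a two-sided geometric one. -/
lemma summable_int_of_norm_le_exp_neg_abs {G : ℤ → ℂ} {K c : ℝ} (hc : 0 < c)
    (hG : ∀ n : ℤ, ‖G n‖ ≤ K * Real.exp (-c * |(n : ℝ)|)) : Summable G := by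
  have hs : Summable fun n : ℕ => Real.exp (-c * (n : ℝ)) := by
    simpa [mul_comm] using Real.summable_exp_nat_mul_iff.mpr (neg_lt_zero.mpr hc)
  refine Summable.of_norm_bounded (Summable.mul_left K ?_) hG
  apply Summable.of_nat_of_neg <;> simpa using hs

/-- Truncation error of a two-sided series dominated by a two-sided geometric one. -/
lemma norm_sum_Icc_sub_tsum_le {G : ℤ → ℂ} {K c : ℝ} (hc : 0 < c)
    (hG : ∀ n : ℤ, ‖G n‖ ≤ K * Real.exp (-c * |(n : ℝ)|)) (N : ℕ) :
    ‖∑ n ∈ Finset.Icc (-(N : ℤ)) (N : ℤ), G n - ∑' n, G n‖ ≤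
      2 * K * Real.exp (-c * N) / (Real.exp c - 1) := by
  have hlim : Filter.Tendsto (fun N : ℕ => ∑ n ∈ Finset.Icc (-(N : ℤ)) (N : ℤ), G n)
      Filter.atTop (nhds (∑' n, G n)) :=
    (summable_int_of_norm_le_exp_neg_abs hc hG).hasSum.comp Finset.tendsto_Icc_neg
  have hstep : ∀ n : ℕ, dist (∑ k ∈ Finset.Icc (-(n : ℤ)) (n : ℤ), G k)
      (∑ k ∈ Finset.Icc (-((n + 1 : ℕ) : ℤ)) ((n + 1 : ℕ) : ℤ), G k) ≤
        2 * K * Real.exp (-c) * Real.exp (-c) ^ n := by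
    intro n
    have h₁ := hG (n + 1)
    have h₂ := hG (-(n + 1))
    have habs : |(n : ℝ) + 1| = n + 1 := abs_of_nonneg (by positivity)
    push_cast at h₁ h₂
    rw [abs_neg] at h₂
    rw [habs] at h₁ h₂
    have hexp : Real.exp (-c * (n + 1)) = Real.exp (-c) * Real.exp (-c) ^ n := by
      rw [← Real.exp_nat_mul, ← Real.exp_add]
      ring_nf
    rw [hexp] at h₁ h₂
    rw [dist_comm, dist_eq_norm]
    push_cast
    rw [Finset.Icc_succ_succ, Finset.sum_union (by simp), Finset.sum_pair (by lia),
      add_sub_cancel_left]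
    refine (norm_add_le _ _).trans ?_
    linarith
  have hr : Real.exp (-c) < 1 := by simpa using hc
  have hmain := dist_le_of_le_geometric_of_tendsto _ _ hr hstep hlim N
  rw [dist_eq_norm] at hmain
  refine hmain.trans (le_of_eq ?_)
  have h1 : Real.exp c - 1 ≠ 0 := by
    have := Real.add_one_lt_exp hc.ne'
    linarith
  have h2 : 1 - Real.exp (-c) ≠ 0 := by linarith
  have h3 : Real.exp (-c) * Real.exp c = 1 := by rw [← Real.exp_add]; simp
  rw [div_eq_div_iff h2 h1, ← Real.exp_nat_mul, mul_comm (N : ℝ) (-c)]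
  linear_combination (2 * K * Real.exp (-c * N)) * h3

/-- `u / sinh u` decays exponentially. -/
lemma div_sinh_le {u : ℝ} (hu : 0 < u) : u / Real.sinh u ≤ 4 * Real.exp (-u / 2) := by
  rw [div_le_iff₀ (Real.sinh_pos_iff.mpr hu), Real.sinh_eq]
  have h1 : u / 2 + 1 ≤ Real.exp (u / 2) := Real.add_one_le_exp _
  have h2 : Real.exp (-u / 2) * Real.exp (u / 2) = 1 := by rw [← Real.exp_add]; ring_nf; simp
  have h3 : Real.exp u = Real.exp (u / 2) ^ 2 := by rw [← Real.exp_nat_mul]; ring_nf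
  have h4 : Real.exp (-u) = Real.exp (-u / 2) ^ 2 := by rw [← Real.exp_nat_mul]; ring_nf
  have h5 : Real.exp (-u / 2) ≤ 1 := Real.exp_le_one_iff.mpr (by linarith)
  have h6 := Real.exp_pos (-u / 2)
  rw [h3, h4]
  have h7 : Real.exp (-u / 2) ^ 3 ≤ 1 := pow_le_one₀ h6.le h5
  have h8 : 4 * Real.exp (-u / 2) * ((Real.exp (u / 2) ^ 2 - Real.exp (-u / 2) ^ 2) / 2)
      = 2 * Real.exp (u / 2) - 2 * Real.exp (-u / 2) ^ 3 := by
    linear_combination (2 * Real.exp (u / 2)) * h2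
  rw [h8]
  linarith

/-- The reflection formula on the line `re s = 1`. -/
lemma norm_Gamma_one_add_mul_I_sq {y : ℝ} (hy : y ≠ 0) :
    ‖Complex.Gamma (1 + y * Complex.I)‖ ^ 2 = π * y / Real.sinh (π * y) := by
  have hz : (y : ℂ) * Complex.I ≠ 0 := by simp [hy]
  have hc : (starRingEnd ℂ) (Complex.Gamma (1 + y * Complex.I)) =
      Complex.Gamma (1 - y * Complex.I) := by
    rw [← Complex.Gamma_conj]; simp [sub_eq_add_neg]
  have hsq := Complex.mul_conj' (Complex.Gamma (1 + y * Complex.I))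
  rw [hc, add_comm, Complex.Gamma_add_one _ hz, mul_assoc, Complex.Gamma_mul_Gamma_one_sub,
    ← mul_assoc (π : ℂ), Complex.sin_mul_I] at hsq
  rw [add_comm]
  apply Complex.ofReal_injective
  push_cast
  rw [Complex.Gamma_add_one _ hz, ← hsq]
  have hs : Complex.sinh (π * y) ≠ 0 := by
    have : Real.sinh (π * y) ≠ 0 := by
      rw [Ne, Real.sinh_eq_zero]; exact mul_ne_zero Real.pi_ne_zero hy
    exact_mod_cast this
  field_simp

/-- Exponential decay of the Gamma function on the line `re s = 1`. -/
lemma norm_Gamma_one_add_mul_I_le (y : ℝ) :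
    ‖Complex.Gamma (1 + y * Complex.I)‖ ≤ 2 * Real.exp (-(π / 4) * |y|) := by
  rcases eq_or_ne y 0 with rfl | hy
  · simp
  have hu : 0 < π * |y| := by positivity
  have habs : π * y / Real.sinh (π * y) = π * |y| / Real.sinh (π * |y|) := by
    rcases abs_choice y with h | h <;> rw [h]
    rw [mul_neg, Real.sinh_neg, neg_div_neg_eq]
  refine le_of_sq_le_sq ?_ (by positivity)
  rw [norm_Gamma_one_add_mul_I_sq hy, habs]
  refine (div_sinh_le hu).trans (le_of_eq ?_)
  rw [mul_pow, ← Real.exp_nat_mul]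
  ring_nf

/-- The integrand of `1 / l = ∫ e^{-u} exp (-l e^{-u}) du`, as a complex-valued function. -/
noncomputable def sincKernel (l u : ℝ) : ℂ :=
  ((Real.exp (-u) * Real.exp (-Real.exp (-u) * l) : ℝ) : ℂ)

lemma continuous_sincKernel (l : ℝ) : Continuous (sincKernel l) := by
  unfold sincKernel
  fun_prop

lemma norm_sincKernel_le {a l : ℝ} (ha : 0 < a) (hl : a ≤ l) (u : ℝ) :
    ‖sincKernel l u‖ ≤ (1 + 2 / a ^ 2) * Real.exp (-|u|) := by
  have hE := Real.exp_pos (-u)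
  have ha2 : 0 < 2 / a ^ 2 := by positivity
  rw [sincKernel, Complex.norm_real, Real.norm_of_nonneg (by positivity)]
  rcases le_total 0 u with h | h
  · rw [abs_of_nonneg h]
    have : Real.exp (-Real.exp (-u) * l) ≤ 1 := Real.exp_le_one_iff.mpr (by nlinarith)
    nlinarith
  · rw [abs_of_nonpos h, neg_neg]
    have hq : (Real.exp (-u) * a) ^ 2 / 2 ≤ Real.exp (Real.exp (-u) * a) := by
      have := Real.quadratic_le_exp_of_nonneg (x := Real.exp (-u) * a) (by positivity)
      nlinarith [mul_pos hE ha]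
    have hm : Real.exp (-Real.exp (-u) * l) ≤ (Real.exp (Real.exp (-u) * a))⁻¹ := by
      rw [← Real.exp_neg]
      exact Real.exp_le_exp.mpr (by nlinarith)
    have hi : (Real.exp (Real.exp (-u) * a))⁻¹ ≤ ((Real.exp (-u) * a) ^ 2 / 2)⁻¹ :=
      inv_anti₀ (by positivity) hq
    have hv : Real.exp u = (Real.exp (-u))⁻¹ := by rw [Real.exp_neg, inv_inv]
    calc Real.exp (-u) * Real.exp (-Real.exp (-u) * l)
        ≤ Real.exp (-u) * ((Real.exp (-u) * a) ^ 2 / 2)⁻¹ := by gcongr; exact hm.trans hi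
      _ = 2 / a ^ 2 * Real.exp u := by rw [hv]; field_simp
      _ ≤ (1 + 2 / a ^ 2) * Real.exp u := by gcongr; linarith

/-- The Fourier transform of the kernel is a Gamma function on the line `re s = 1`. -/
lemma fourier_sincKernel {l : ℝ} (hl : 0 < l) (ξ : ℝ) :
    𝓕 (sincKernel l) ξ = (1 / l : ℂ) ^ (1 + ((2 * π * ξ : ℝ) : ℂ) * Complex.I) *
      Complex.Gamma (1 + ((2 * π * ξ : ℝ) : ℂ) * Complex.I) := by
  set s : ℂ := 1 + ((2 * π * ξ : ℝ) : ℂ) * Complex.I with hs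
  have hre : s.re = 1 := by simp [hs]
  have him : s.im = 2 * π * ξ := by simp [hs]
  rw [← Complex.integral_cpow_mul_exp_neg_mul_Ioi (by rw [hre]; exact one_pos) hl]
  have h := mellin_eq_fourier (fun t : ℝ => Complex.exp (-(l * t))) (s := s)
  rw [hre, him, mul_div_cancel_left₀ _ (by positivity)] at h
  simp only [mellin, smul_eq_mul] at h
  rw [h]
  refine congrArg (fun f : ℝ → ℂ => 𝓕 f ξ) (funext fun u => ?_)
  simp [sincKernel, mul_comm]

lemma fourier_const_mul_comp_mul_left (f : ℝ → ℂ) {h : ℝ} (hh : 0 < h) (ξ : ℝ) :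
    𝓕 (fun x : ℝ => (h : ℂ) * f (h * x)) ξ = 𝓕 f (ξ / h) := by
  rw [Real.fourier_real_eq_integral_exp_smul, Real.fourier_real_eq_integral_exp_smul]
  have key := MeasureTheory.Measure.integral_comp_mul_left
    (fun v : ℝ => Complex.exp (↑(-2 * π * v * (ξ / h)) * Complex.I) • f v) h
  have hI : ∫ v : ℝ, Complex.exp (↑(-2 * π * v * (ξ / h)) * Complex.I) • f v =
      (h : ℂ) * ∫ x : ℝ, Complex.exp (↑(-2 * π * (h * x) * (ξ / h)) * Complex.I) • f (h * x) := by
    rw [key, abs_of_pos (inv_pos.mpr hh), Complex.real_smul, ← mul_assoc, Complex.ofReal_inv,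
      mul_inv_cancel₀ (by exact_mod_cast hh.ne'), one_mul]
  rw [hI, ← MeasureTheory.integral_const_mul]
  congr 1
  ext x
  have : -2 * π * (h * x) * (ξ / h) = -2 * π * x * ξ := by field_simp
  rw [this, smul_eq_mul, smul_eq_mul]
  ring

lemma norm_fourier_sincKernel_le {l : ℝ} (hl : 0 < l) (ξ : ℝ) :
    ‖𝓕 (sincKernel l) ξ‖ ≤ 2 / l * Real.exp (-(π ^ 2 / 2) * |ξ|) := by
  have hn : ‖(1 / l : ℂ) ^ (1 + ((2 * π * ξ : ℝ) : ℂ) * Complex.I)‖ = 1 / l := by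
    have := Complex.norm_cpow_eq_rpow_re_of_pos (one_div_pos.mpr hl)
      (1 + ((2 * π * ξ : ℝ) : ℂ) * Complex.I)
    push_cast at this ⊢
    rw [this]
    simp
  rw [fourier_sincKernel hl, norm_mul, hn]
  have hG := norm_Gamma_one_add_mul_I_le (2 * π * ξ)
  have he : -(π / 4) * |2 * π * ξ| = -(π ^ 2 / 2) * |ξ| := by
    rw [abs_mul, abs_of_pos (by positivity : 0 < 2 * π)]
    ring
  rw [he] at hG
  calc 1 / l * _ ≤ 1 / l * (2 * Real.exp (-(π ^ 2 / 2) * |ξ|)) := by gcongr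
    _ = _ := by ring

lemma fourier_sincKernel_zero {l : ℝ} (hl : 0 < l) : 𝓕 (sincKernel l) 0 = ((1 / l : ℝ) : ℂ) := by
  rw [fourier_sincKernel hl]
  simp

/-- Poisson summation for the dilated kernel. -/
lemma tsum_sincKernel_eq {l h : ℝ} (hl : 0 < l) (hh : 0 < h) :
    ∑' n : ℤ, (h : ℂ) * sincKernel l (h * n) = ∑' n : ℤ, 𝓕 (sincKernel l) (n / h) := by
  have hc : Continuous fun x : ℝ => (h : ℂ) * sincKernel l (h * x) :=
    continuous_const.mul ((continuous_sincKernel l).comp (continuous_const.mul continuous_id))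
  have hdecay : (fun x : ℝ => (h : ℂ) * sincKernel l (h * x)) =O[Filter.cocompact ℝ]
      fun x : ℝ => |x| ^ (-2 : ℝ) := by
    have h1 : (fun x : ℝ => (h : ℂ) * sincKernel l (h * x)) =O[Filter.cocompact ℝ]
        fun x : ℝ => Real.exp (-h * |x|) := by
      refine Asymptotics.IsBigO.of_bound (h * (1 + 2 / l ^ 2)) (Filter.Eventually.of_forall ?_)
      intro x
      have := norm_sincKernel_le hl le_rfl (h * x)
      rw [abs_mul, abs_of_pos hh] at this
      rw [norm_mul, Complex.norm_real, Real.norm_of_nonneg hh.le, Real.norm_of_nonneg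
        (Real.exp_nonneg _), mul_assoc, neg_mul]
      gcongr
    exact h1.trans ((isLittleO_exp_neg_mul_rpow_atTop hh (-2)).isBigO.comp_tendsto
      (tendsto_norm_cocompact_atTop (E := ℝ)))
  have hF : ∀ n : ℤ, 𝓕 (fun x : ℝ => (h : ℂ) * sincKernel l (h * x)) n =
      𝓕 (sincKernel l) (n / h) := fun n => fourier_const_mul_comp_mul_left _ hh n
  have hsum : Summable fun n : ℤ => 𝓕 (fun x : ℝ => (h : ℂ) * sincKernel l (h * x)) n := by
    refine summable_int_of_norm_le_exp_neg_abs (K := 2 / l) (c := π ^ 2 / 2 / h)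
      (by positivity) fun n => ?_
    rw [hF]
    refine (norm_fourier_sincKernel_le hl _).trans (le_of_eq ?_)
    rw [abs_div, abs_of_pos hh]
    ring_nf
  have hP := Real.tsum_eq_tsum_fourier_of_rpow_decay_of_summable hc one_lt_two hdecay hsum 0
  simpa [hF] using hP

/-- Discretization error of the infinite trapezoidal rule. -/
lemma norm_tsum_sincKernel_sub_le {l h : ℝ} (hl : 0 < l) (hh : 0 < h) :
    ‖((1 / l : ℝ) : ℂ) - ∑' n : ℤ, (h : ℂ) * sincKernel l (h * n)‖ ≤
      4 / l / (Real.exp (π ^ 2 / 2 / h) - 1) := by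
  have hb := norm_sum_Icc_sub_tsum_le (G := fun n : ℤ => 𝓕 (sincKernel l) (n / h)) (K := 2 / l)
    (c := π ^ 2 / 2 / h) (by positivity) (fun n => by
      refine (norm_fourier_sincKernel_le hl _).trans (le_of_eq ?_)
      rw [abs_div, abs_of_pos hh]
      ring_nf) 0
  rw [tsum_sincKernel_eq hl hh]
  simp only [Nat.cast_zero, neg_zero, Finset.Icc_self, Finset.sum_singleton, Int.cast_zero,
    zero_div, mul_zero, Real.exp_zero, mul_one, fourier_sincKernel_zero hl] at hb
  refine hb.trans (le_of_eq ?_)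
  ring

/-- Truncation error of the trapezoidal rule. -/
lemma norm_sum_sincKernel_sub_tsum_le {a l h : ℝ} (ha : 0 < a) (hl : a ≤ l) (hh : 0 < h) (N : ℕ) :
    ‖∑ n ∈ Finset.Icc (-(N : ℤ)) (N : ℤ), (h : ℂ) * sincKernel l (h * n) -
      ∑' n : ℤ, (h : ℂ) * sincKernel l (h * n)‖ ≤
        2 * (1 + 2 / a ^ 2) * Real.exp (-h * N) := by
  refine (norm_sum_Icc_sub_tsum_le (K := h * (1 + 2 / a ^ 2)) hh (fun n => ?_) N).trans ?_
  · have := norm_sincKernel_le ha hl (h * n)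
    rw [abs_mul, abs_of_pos hh] at this
    rw [norm_mul, Complex.norm_real, Real.norm_of_nonneg hh.le, mul_assoc, neg_mul]
    gcongr
  · have h1 := Real.add_one_lt_exp hh.ne'
    rw [div_le_iff₀ (by linarith)]
    have : 0 < 2 * (1 + 2 / a ^ 2) * Real.exp (-h * N) := by positivity
    nlinarith

/-- Sinc-quadrature approximation of `1/λ = ∫₀^∞ e^{−λt} dt`: with `𝔥 = π/√M`,
`t_k = e^{k𝔥}`, `c_k = 𝔥 t_k`, the quadrature `Σ_{k=−M}^{M} c_k e^{−t_k λ}` approximates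
`1/λ` uniformly on `[a,∞)` with error `≤ C e^{−β√M}`. -/
theorem sinc_quadrature_inverse_uniform
    (a : ℝ) (ha : 0 < a) :
    ∃ C β : ℝ, 0 < C ∧ 0 < β ∧
      ∀ M : ℕ, 1 ≤ M → ∀ l : ℝ, a ≤ l →
        |1 / l - ∑ k ∈ Finset.Icc (-(M : ℤ)) (M : ℤ),
            (Real.pi / Real.sqrt M * Real.exp ((k : ℝ) * (Real.pi / Real.sqrt M))) *
              Real.exp (-(Real.exp ((k : ℝ) * (Real.pi / Real.sqrt M))) * l)| ≤
          C * Real.exp (-β * Real.sqrt M) := by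
  refine ⟨8 / a + 2 * (1 + 2 / a ^ 2), π / 2, by positivity, by positivity, ?_⟩
  intro M hM l hl
  have hl0 : 0 < l := ha.trans_le hl
  have hM1 : (1 : ℝ) ≤ M := by exact_mod_cast hM
  have hs1 : 1 ≤ √(M : ℝ) := Real.one_le_sqrt.mpr hM1
  have hs : 0 < √(M : ℝ) := by linarith
  set h : ℝ := π / √(M : ℝ) with hh_def
  have hh : 0 < h := by positivity
  have hsum : ((∑ k ∈ Finset.Icc (-(M : ℤ)) (M : ℤ),
      (h * Real.exp ((k : ℝ) * h)) * Real.exp (-(Real.exp ((k : ℝ) * h)) * l) : ℝ) : ℂ) =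
      ∑ n ∈ Finset.Icc (-(M : ℤ)) (M : ℤ), (h : ℂ) * sincKernel l (h * n) := by
    rw [Complex.ofReal_sum]
    refine Finset.sum_equiv (Equiv.neg ℤ) (fun k => ?_) (fun k _ => ?_)
    · simp only [Finset.mem_Icc, Equiv.neg_apply]
      lia
    · simp [sincKernel, mul_comm, mul_assoc]
  have hdisc := norm_tsum_sincKernel_sub_le hl0 hh
  have htrunc := norm_sum_sincKernel_sub_tsum_le ha hl hh M
  have hhM : -h * M = -(π * √(M : ℝ)) := by
    rw [hh_def, neg_mul, div_mul_eq_mul_div, mul_div_assoc, Real.div_sqrt]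
  have hhinv : π ^ 2 / 2 / h = π / 2 * √(M : ℝ) := by
    rw [hh_def]
    field_simp
  rw [hhM] at htrunc
  rw [hhinv] at hdisc
  have hE : 2 ≤ Real.exp (π / 2 * √(M : ℝ)) := by
    have h1 := Real.add_one_le_exp (π / 2 * √(M : ℝ))
    nlinarith [Real.pi_gt_three]
  have hdisc' : 4 / l / (Real.exp (π / 2 * √(M : ℝ)) - 1) ≤
      8 / a * Real.exp (-(π / 2) * √(M : ℝ)) := by
    calc 4 / l / (Real.exp (π / 2 * √(M : ℝ)) - 1)
        ≤ 4 / a / (Real.exp (π / 2 * √(M : ℝ)) / 2) := by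
          gcongr
          linarith
      _ = 8 / a * Real.exp (-(π / 2) * √(M : ℝ)) := by
          rw [neg_mul, Real.exp_neg]
          field_simp
          norm_num
  have htrunc' : Real.exp (-(π * √(M : ℝ))) ≤ Real.exp (-(π / 2) * √(M : ℝ)) :=
    Real.exp_le_exp.mpr (by nlinarith [Real.pi_pos])
  rw [← Real.norm_eq_abs, ← Complex.norm_real, Complex.ofReal_sub, hsum]
  calc _ ≤ _ + _ := norm_sub_le_norm_sub_add_norm_sub _
          (∑' n : ℤ, (h : ℂ) * sincKernel l (h * n)) _
    _ ≤ 8 / a * Real.exp (-(π / 2) * √(M : ℝ)) +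
        2 * (1 + 2 / a ^ 2) * Real.exp (-(π / 2) * √(M : ℝ)) := by
      refine add_le_add (hdisc.trans hdisc') ?_
      rw [norm_sub_rev]
      refine htrunc.trans ?_
      gcongr
    _ = _ := by ring
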